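/- Let F/ℚ be a finite imaginary abelian extension with Galois group G, let c ∈ G be complex conjugation, let S be a set of primes not dividing #G, and let T⁻ = ℤ_(S)[G]/(1+c). Let U be the set of primes q ∈ S such that F contains a primitive q-th root of unity. Then the group T⁻ ⊗_{ℤ[G]} μ_F is cyclic of order ∏_{q∈U} q, where μ_F is the group of roots of unity of F. -/

import Mathlib

/-!
The group `μ_F` is cyclic of some order `n`, and the group ring `ℤ[G]` acts on it through scalars.
If `q ^ 2 ∣ n`, then `F` contains the `q ^ 2`-th roots of unity, so `q` divides
`φ (q ^ 2) ∣ [F : ℚ] = #G` (`dvd_finrank_of_sq_dvd_card_torsion`). Hence no square of a prime of `S`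
divides `n`, and `n = m * k` with `m = ∏_{q ∈ U} q` and `k` invertible in `ℤ_(S)`.

Let `ζ` be a generator of `μ_F`. Clearing denominators, `1 ⊗ ζ` generates `T⁻ ⊗ μ_F`, and it is
killed by `m` because `k` is a unit in `T⁻`. In the other direction, the action of `ℤ[G]` on
`μ_F / m ≅ ℤ/m` is given by a ring homomorphism `ℤ[G] → ℤ/m`
(`exists_ringHom_of_generator`). It sends `c` to `-1`, since complex conjugation inverts roots of
unity, and the integers inverted in `ℤ_(S)` are prime to `m`; so it extends to `ψ : T⁻ → ℤ/m`
(`exists_lift_Tminus`). Then `t ⊗ z ↦ ψ(t) z` is a well-defined map `T⁻ ⊗ μ_F → ℤ/m` sending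
`1 ⊗ ζ` to `1`, so `1 ⊗ ζ` has order exactly `m` (`tensor_cyclic`).
-/


/-- The ring `ℤ_(S) = {a/b : a, b ∈ ℤ, b ∉ ⋃_{p ∈ S ∪ {0}} pℤ}`, realised as the
localization of `ℤ` at the multiplicative set (generated by the) nonzero integers
divisible by no prime of `S`. -/
def Zloc (S : Set ℕ) : Type :=
  Localization (Submonoid.closure {n : ℤ | n ≠ 0 ∧ ∀ p ∈ S, ¬ ((p : ℤ) ∣ n)})

noncomputable instance (S : Set ℕ) : CommRing (Zloc S) :=
  inferInstanceAs (CommRing (Localization _))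

/-- The group ring `T = ℤ_(S)[G]`. -/
def Tring (S : Set ℕ) (G : Type) [CommGroup G] : Type := MonoidAlgebra (Zloc S) G

noncomputable instance (S : Set ℕ) (G : Type) [CommGroup G] : CommRing (Tring S G) :=
  inferInstanceAs (CommRing (MonoidAlgebra (Zloc S) G))

/-- The ring `T⁻ = ℤ_(S)[G]/(1+c)`. -/
def Tminus (S : Set ℕ) (G : Type) [CommGroup G] (c : G) : Type :=
  Tring S G ⧸ (Ideal.span {1 + MonoidAlgebra.single c (1 : Zloc S)} : Ideal (Tring S G))

noncomputable instance (S : Set ℕ) (G : Type) [CommGroup G] (c : G) :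
    CommRing (Tminus S G c) :=
  inferInstanceAs (CommRing (_ ⧸ (_ : Ideal (Tring S G))))

/-- The canonical ring homomorphism `ℤ[G] → T⁻`, through which `T⁻` is a
`ℤ[G]`-algebra/module. -/
noncomputable def intGroupRingHomTminus (S : Set ℕ) (G : Type) [CommGroup G] (c : G) :
    MonoidAlgebra ℤ G →+* Tminus S G c :=
  (Ideal.Quotient.mk _).comp
    (MonoidAlgebra.liftNCRingHom (Int.castRingHom (Tring S G))
      (MonoidAlgebra.of (Zloc S) G) (fun _ _ => mul_comm _ _))

noncomputable instance (S : Set ℕ) (G : Type) [CommGroup G] (c : G) :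
    Module (MonoidAlgebra ℤ G) (Tminus S G c) :=
  (intGroupRingHomTminus S G c).toModule

open TensorProduct

/-! ### Tensor products with a cyclic module -/

/-- If `M` is generated by `ζ` as an abelian group, then `R` acts on the quotient `ℤ/m` of `M`
through a ring homomorphism `r ↦ θ (r • ζ)`. -/
theorem exists_ringHom_of_generator {R M : Type*} [CommRing R] [AddCommGroup M] [Module R M]
    {m : ℕ} (ζ : M) (hζ : ∀ z : M, ∃ a : ℤ, a • ζ = z) (θ : M →+ ZMod m) (hθ : θ ζ = 1) :
    ∃ ρ : R →+* ZMod m, ∀ (r : R) (z : M), θ (r • z) = ρ r * θ z := by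
  have key : ∀ (r : R) (z : M), θ (r • z) = θ (r • ζ) * θ z := by
    intro r z
    obtain ⟨a, rfl⟩ := hζ z
    rw [smul_comm r a ζ, map_zsmul, map_zsmul, hθ]
    simp [mul_comm]
  refine ⟨{ toFun := fun r => θ (r • ζ), map_one' := ?_, map_mul' := ?_, map_zero' := ?_,
            map_add' := ?_ }, key⟩
  · simp [hθ]
  · intro r s
    rw [mul_smul, key]
  · simp
  · intro r s
    rw [add_smul, map_add]

/-- The computation of `A ⊗[R] M` for a cyclic group `M = ℤζ` killed by `m * k`, with `k`
invertible in `A`: the element `1 ⊗ ζ` generates because every `t : A` has a multiple, by an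
integer prime to `m`, coming from `R`; its order is `m` because of the map
`t ⊗ z ↦ ψ t * θ z` to `ℤ/m`. -/
theorem tensor_cyclic {R A M : Type*} [CommRing R] [CommRing A] [Module R A] [AddCommGroup M]
    [Module R M] (h : R →+* A) (hsm : ∀ (r : R) (t : A), r • t = h r * t)
    (m k : ℕ) (ζ : M) (hζ : ∀ z : M, ∃ a : ℤ, a • ζ = z) (hn : (m * k) • ζ = 0)
    (hk : IsUnit (k : A))
    (hdense : ∀ t : A, ∃ b : ℤ, IsCoprime b (m : ℤ) ∧ ∃ r : R, (b : A) * t = h r)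
    (θ : M →+ ZMod m) (hθ : θ ζ = 1) (ψ : A →+* ZMod m)
    (hψ : ∀ r, ψ (h r) = θ (r • ζ)) :
    IsAddCyclic (A ⊗[R] M) ∧ Nat.card (A ⊗[R] M) = m := by
  have htz : ∀ (a : ℤ) (t : A) (z : M), t ⊗ₜ[R] (a • z) = a • (t ⊗ₜ[R] z) := fun a t z =>
    map_zsmul (TensorProduct.mk R A M t) a z
  have hzt : ∀ (a : ℤ) (t : A) (z : M), (a • t) ⊗ₜ[R] z = a • (t ⊗ₜ[R] z) := fun a t z =>
    map_zsmul ((TensorProduct.mk R A M).flip z) a t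
  have hm : ∀ t : A, (m : ℤ) • (t ⊗ₜ[R] ζ) = 0 := by
    intro t
    obtain ⟨u, hu⟩ := hk
    have ht : t = (k : ℤ) • ((↑u⁻¹ : A) * t) := by
      rw [zsmul_eq_mul, Int.cast_natCast, ← hu, Units.mul_inv_cancel_left]
    rw [ht, ← hzt, smul_smul, hzt, ← htz]
    have : ((m : ℤ) * (k : ℤ)) • ζ = 0 := by rw [← hn, ← natCast_zsmul]; push_cast; rfl
    rw [this, tmul_zero]
  have hgen : ∀ x : A ⊗[R] M, x ∈ AddSubgroup.zmultiples ((1 : A) ⊗ₜ[R] ζ) := by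
    intro x
    induction x with
    | zero => exact zero_mem _
    | add x y hx hy => exact add_mem hx hy
    | tmul t z =>
      obtain ⟨a, rfl⟩ := hζ z
      rw [htz]
      refine zsmul_mem ?_ a
      obtain ⟨b, ⟨u, v, huv⟩, r, hr⟩ := hdense t
      obtain ⟨j, hj⟩ := hζ (r • ζ)
      have hb : b • (t ⊗ₜ[R] ζ) = j • ((1 : A) ⊗ₜ[R] ζ) := by
        rw [← hzt, ← htz, hj, zsmul_eq_mul, hr, ← smul_tmul, hsm, mul_one]
      have : t ⊗ₜ[R] ζ = (u * j) • ((1 : A) ⊗ₜ[R] ζ) := by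
        calc t ⊗ₜ[R] ζ = (u * b + v * (m : ℤ)) • (t ⊗ₜ[R] ζ) := by rw [huv, one_smul]
          _ = _ := by rw [add_smul, mul_smul, mul_smul, hm, hb, smul_zero, add_zero, mul_smul]
      rw [this]
      exact zsmul_mem (AddSubgroup.mem_zmultiples _) _
  refine ⟨⟨_, hgen⟩, ?_⟩
  rw [← addOrderOf_eq_card_of_forall_mem_zmultiples hgen]
  have hbal : ∀ (r : R) (t : A) (z : M), ψ (r • t) * θ z = ψ t * θ (r • z) := by
    intro r t z
    obtain ⟨a, rfl⟩ := hζ z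
    rw [hsm, map_mul, hψ, smul_comm r a ζ, map_zsmul, map_zsmul, hθ]
    simp only [zsmul_eq_mul]
    ring
  -- The map `t ⊗ z ↦ ψ t * θ z`.
  let f : A ⊗[R] M →+ ZMod m := liftAddHom
    ((AddMonoidHom.mul.comp ψ.toAddMonoidHom).compr₂ (AddMonoidHom.id _) |>.compl₂ θ) hbal
  have hf : f ((1 : A) ⊗ₜ[R] ζ) = 1 := by
    change ψ 1 * θ ζ = 1
    rw [hθ, map_one, one_mul]
  refine Nat.dvd_antisymm ?_ ?_
  · rw [addOrderOf_dvd_iff_nsmul_eq_zero, ← natCast_zsmul]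
    exact hm 1
  · rw [← ZMod.natCast_eq_zero_iff]
    have := congrArg f (addOrderOf_nsmul_eq_zero ((1 : A) ⊗ₜ[R] ζ))
    rw [map_nsmul, hf, map_zero] at this
    simpa using this

/-! ### The rings `ℤ_(S)` and `T⁻` -/

/-- The multiplicative set inverted in `ℤ_(S)`. -/
abbrev SUnits (S : Set ℕ) : Submonoid ℤ :=
  Submonoid.closure {n : ℤ | n ≠ 0 ∧ ∀ p ∈ S, ¬ ((p : ℤ) ∣ n)}

noncomputable instance (S : Set ℕ) : Algebra ℤ (Zloc S) :=
  inferInstanceAs (Algebra ℤ (Localization (SUnits S)))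

instance (S : Set ℕ) : IsLocalization (SUnits S) (Zloc S) :=
  inferInstanceAs (IsLocalization (SUnits S) (Localization (SUnits S)))

theorem not_dvd_of_mem_SUnits {S : Set ℕ} (hS : ∀ p ∈ S, p.Prime) {b : ℤ} (hb : b ∈ SUnits S)
    {p : ℕ} (hp : p ∈ S) : ¬ (p : ℤ) ∣ b := by
  induction hb using Submonoid.closure_induction with
  | mem x hx => exact hx.2 p hp
  | one => exact fun h => (hS p hp).one_lt.ne' (by exact_mod_cast Int.eq_one_of_dvd_one (by simp) h)
  | mul x y _ _ hx hy =>
    exact fun h => ((Nat.prime_iff_prime_int.mp (hS p hp)).dvd_or_dvd h).elim hx hy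

theorem isCoprime_of_mem_SUnits {S : Set ℕ} (hS : ∀ p ∈ S, p.Prime) {b : ℤ} (hb : b ∈ SUnits S)
    (s : Finset ℕ) (hs : ∀ q ∈ s, q ∈ S) : IsCoprime b ((∏ q ∈ s, q : ℕ) : ℤ) := by
  rw [Nat.cast_prod]
  refine IsCoprime.prod_right fun q hq => ?_
  exact (((Nat.prime_iff_prime_int.mp (hS q (hs q hq))).coprime_iff_not_dvd).mpr
    (not_dvd_of_mem_SUnits hS hb (hs q hq))).symm

section Tminus

variable (S : Set ℕ) (G : Type) [CommGroup G] (c : G)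

/-- The canonical ring homomorphism `ℤ_(S)[G] → T⁻`. -/
noncomputable def tminusMk : MonoidAlgebra (Zloc S) G →+* Tminus S G c :=
  show Tring S G →+* Tminus S G c from
    Ideal.Quotient.mk (Ideal.span {1 + MonoidAlgebra.single c (1 : Zloc S)} : Ideal (Tring S G))

/-- The canonical ring homomorphism `ℤ_(S) → T⁻`. -/
noncomputable def zlocToTminus : Zloc S →+* Tminus S G c :=
  (tminusMk S G c).comp MonoidAlgebra.singleOneRingHom

theorem tminusMk_surjective : Function.Surjective (tminusMk S G c) :=
  fun t => Ideal.Quotient.mk_surjective (R := Tring S G) t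

theorem intGroupRingHomTminus_single (g : G) (a : ℤ) :
    intGroupRingHomTminus S G c (MonoidAlgebra.single g a) =
      tminusMk S G c (MonoidAlgebra.single g (a : Zloc S)) := by
  have h1 : intGroupRingHomTminus S G c (MonoidAlgebra.single g a) =
      tminusMk S G c (((a : ℤ) : MonoidAlgebra (Zloc S) G) * MonoidAlgebra.single g 1) :=
    congrArg (tminusMk S G c) (MonoidAlgebra.liftNC_single
      ((Int.castRingHom (Tring S G) : ℤ →+* Tring S G) : ℤ →+ Tring S G)
      (MonoidAlgebra.of (Zloc S) G : G → Tring S G) g a)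
  rw [h1]
  congr 1
  rw [← zsmul_eq_mul, MonoidAlgebra.smul_single]
  simp

theorem isUnit_intCast_Tminus {b : ℤ} (hb : b ∈ SUnits S) : IsUnit (b : Tminus S G c) := by
  have h := (IsLocalization.map_units (Zloc S) (⟨b, hb⟩ : SUnits S)).map (zlocToTminus S G c)
  simpa using h

/-- Clearing denominators in `T⁻`. -/
theorem exists_mul_eq_Tminus (t : Tminus S G c) :
    ∃ b ∈ SUnits S, ∃ r, (b : Tminus S G c) * t = intGroupRingHomTminus S G c r := by
  obtain ⟨x, rfl⟩ := tminusMk_surjective S G c t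
  induction x using MonoidAlgebra.induction_linear with
  | zero => exact ⟨1, one_mem _, 0, by simp⟩
  | add x y hx hy =>
    obtain ⟨b, hb, r, hr⟩ := hx
    obtain ⟨b', hb', r', hr'⟩ := hy
    refine ⟨b * b', mul_mem hb hb', (b' : MonoidAlgebra ℤ G) * r + b * r', ?_⟩
    rw [map_add, map_add, map_mul, map_mul, map_intCast, map_intCast, ← hr, ← hr']
    push_cast
    ring
  | single g x =>
    obtain ⟨⟨a, b⟩, hab⟩ := IsLocalization.surj (SUnits S) x
    refine ⟨b, b.2, MonoidAlgebra.single g a, ?_⟩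
    rw [intGroupRingHomTminus_single, ← map_intCast (tminusMk S G c), ← map_mul,
      ← zsmul_eq_mul, MonoidAlgebra.smul_single, zsmul_eq_mul]
    congr 2
    simpa [mul_comm] using hab

/-- A ring homomorphism `ℤ[G] → ℤ/m` killing `1 + c` factors through `T⁻`, as soon as the integers
inverted in `ℤ_(S)` are prime to `m`. -/
theorem exists_lift_Tminus (m : ℕ) (hm : ∀ b ∈ SUnits S, IsCoprime b (m : ℤ))
    (ρ : MonoidAlgebra ℤ G →+* ZMod m) (hρ : ρ (MonoidAlgebra.single c 1) = -1) :
    ∃ ψ : Tminus S G c →+* ZMod m, ∀ r, ψ (intGroupRingHomTminus S G c r) = ρ r := by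
  have hu : ∀ b : SUnits S, IsUnit (Int.castRingHom (ZMod m) b) := by
    rintro ⟨b, hb⟩
    obtain ⟨u, v, huv⟩ := hm b hb
    refine IsUnit.of_mul_eq_one_right (u : ZMod m) ?_
    have := congrArg (Int.cast : ℤ → ZMod m) huv
    simpa using this
  let ψ₀ : Zloc S →+* ZMod m := IsLocalization.lift hu
  let ψ₁ : MonoidAlgebra (Zloc S) G →+* ZMod m :=
    MonoidAlgebra.liftNCRingHom ψ₀ ((ρ : MonoidAlgebra ℤ G →* ZMod m).comp (MonoidAlgebra.of ℤ G))
      (fun _ _ => mul_comm _ _)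
  have hψ₁ : ∀ (g : G) (x : Zloc S),
      ψ₁ (MonoidAlgebra.single g x) = ψ₀ x * ρ (MonoidAlgebra.single g 1) :=
    fun g x => MonoidAlgebra.liftNC_single _ _ _ _
  let ψ : Tminus S G c →+* ZMod m := Ideal.Quotient.lift _ (show Tring S G →+* ZMod m from ψ₁) (by
    intro a ha
    obtain ⟨y, rfl⟩ := Ideal.mem_span_singleton'.mp ha
    have h0 : ψ₁ (1 + MonoidAlgebra.single c (1 : Zloc S)) = 0 := by
      rw [map_add, map_one, hψ₁, hρ]; simp
    exact (map_mul ψ₁ _ _).trans (by rw [h0, mul_zero]))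
  have hψ : ∀ x, ψ (tminusMk S G c x) = ψ₁ x := fun x => rfl
  refine ⟨ψ, fun r => ?_⟩
  suffices ψ.comp (intGroupRingHomTminus S G c) = ρ from congrArg (fun f => f r) this
  refine MonoidAlgebra.ringHom_ext (fun a => ?_) (fun g => ?_)
  · rw [RingHom.comp_apply, intGroupRingHomTminus_single, hψ, hψ₁, ← MonoidAlgebra.one_def]
    have : MonoidAlgebra.single (1 : G) a = ((a : ℤ) : MonoidAlgebra ℤ G) := by
      rw [← mul_one ((a : ℤ) : MonoidAlgebra ℤ G), ← zsmul_eq_mul, MonoidAlgebra.one_def,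
        MonoidAlgebra.smul_single]
      simp
    rw [this]; simp
  · rw [RingHom.comp_apply, intGroupRingHomTminus_single, hψ, hψ₁]; simp

/-- The module-theoretic form of the theorem: the only input from number theory is that the cyclic
module `M` is acted on by `c` through inversion and that no square of a prime of `S` divides its order. -/
theorem Tminus_tensor_cyclic (hS : ∀ p ∈ S, p.Prime) (M : Type) [AddCommGroup M]
    [Module (MonoidAlgebra ℤ G) M] [Finite M] [IsAddCyclic M]
    (hcM : ∀ z : M, MonoidAlgebra.single c (1 : ℤ) • z = -z)
    (hsq : ∀ q ∈ S, ¬ q ^ 2 ∣ Nat.card M)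
    (s : Finset ℕ) (hs : ∀ q, q ∈ s ↔ q ∈ S ∧ q ∣ Nat.card M) :
    IsAddCyclic (Tminus S G c ⊗[MonoidAlgebra ℤ G] M) ∧
      Nat.card (Tminus S G c ⊗[MonoidAlgebra ℤ G] M) = ∏ q ∈ s, q := by
  obtain ⟨ζ, hζ⟩ := IsAddCyclic.exists_generator (α := M)
  have hdvd : ∏ q ∈ s, q ∣ Nat.card M :=
    Finset.prod_primes_dvd _ (fun q hq => (hS q ((hs q).1 hq).1).prime) fun q hq => ((hs q).1 hq).2
  obtain ⟨k, hk⟩ := hdvd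
  -- A prime of `S` dividing `k` would also divide `∏ q ∈ s, q`, so its square would divide `#M`.
  have hkS : (k : ℤ) ∈ SUnits S := by
    refine Submonoid.subset_closure ⟨?_, fun p hp hpk => ?_⟩
    · rintro h0
      have : k = 0 := by exact_mod_cast h0
      rw [this, mul_zero] at hk
      exact Nat.card_pos.ne' hk
    · have hpk : p ∣ k := by exact_mod_cast hpk
      refine hsq p hp ?_
      have hps : p ∈ s := (hs p).2 ⟨hp, hk ▸ hpk.mul_left _⟩
      rw [hk, pow_two]
      exact mul_dvd_mul (Finset.dvd_prod_of_mem _ hps) hpk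
  have hcop : ∀ b ∈ SUnits S, IsCoprime b ((∏ q ∈ s, q : ℕ) : ℤ) := fun b hb =>
    isCoprime_of_mem_SUnits hS hb s fun q hq => ((hs q).1 hq).1
  let θ : M →+ ZMod (∏ q ∈ s, q) :=
    ((ZMod.castHom (Dvd.intro k hk.symm) (ZMod (∏ q ∈ s, q)) : _ →+* _) : _ →+ _).comp
      (zmodAddEquivOfGenerator hζ rfl).symm.toAddMonoidHom
  have hθ : θ ζ = 1 := by
    change ZMod.castHom (Dvd.intro k hk.symm) (ZMod (∏ q ∈ s, q)) ((zmodAddEquivOfGenerator hζ rfl).symm ζ) = 1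
    rw [zmodAddEquivOfGenerator_symm_apply_generator, map_one]
  obtain ⟨ρ, hρ⟩ := exists_ringHom_of_generator (R := MonoidAlgebra ℤ G) ζ hζ θ hθ
  obtain ⟨ψ, hψ⟩ := exists_lift_Tminus S G c _ hcop ρ (by
    have := hρ (MonoidAlgebra.single c 1) ζ
    rw [hcM, map_neg, hθ, mul_one] at this
    exact this.symm)
  refine tensor_cyclic (intGroupRingHomTminus S G c) (fun _ _ => rfl) _ k ζ hζ ?_ ?_ ?_ θ hθ ψ ?_
  · rw [← hk]; exact card_nsmul_eq_zero'
  · simpa using isUnit_intCast_Tminus S G c hkS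
  · intro t
    obtain ⟨b, hb, r, hr⟩ := exists_mul_eq_Tminus S G c t
    exact ⟨b, hcop b hb, r, hr⟩
  · intro r
    rw [hψ, hρ, hθ, mul_one]

end Tminus

/-! ### Roots of unity in a number field -/

section NumberField

variable (F : Type) [Field F] [NumberField F]

/-- Roots of unity are algebraic integers all of whose complex absolute values are at most `1`, and
there are finitely many of those. -/
theorem finite_torsion_units : Finite (CommGroup.torsion Fˣ) := by
  have hfin := NumberField.Embeddings.finite_of_norm_le F ℂ 1
  have : Finite {x : F | IsIntegral ℤ x ∧ ∀ φ : F →+* ℂ, ‖φ x‖ ≤ 1} := hfin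
  have hpow : ∀ z : CommGroup.torsion Fˣ, ∃ n : ℕ, 0 < n ∧ ((z : Fˣ) : F) ^ n = 1 := by
    intro z
    obtain ⟨n, hn, h⟩ := isOfFinOrder_iff_pow_eq_one.mp z.2
    exact ⟨n, hn, by rw [← Units.val_pow_eq_pow_val, h, Units.val_one]⟩
  refine Finite.of_injective (fun z : CommGroup.torsion Fˣ =>
    (⟨((z : Fˣ) : F), ?_, fun φ => ?_⟩ :
      {x : F | IsIntegral ℤ x ∧ ∀ φ : F →+* ℂ, ‖φ x‖ ≤ 1})) ?_
  · obtain ⟨n, hn, h⟩ := hpow z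
    exact IsIntegral.of_pow hn (h ▸ isIntegral_one)
  · obtain ⟨n, hn, h⟩ := hpow z
    refine (Complex.norm_eq_one_of_pow_eq_one (n := n) ?_ hn.ne').le
    rw [← map_pow, h, map_one]
  · intro x y hxy
    exact Subtype.ext (Units.ext (congrArg Subtype.val hxy))

theorem dvd_card_torsion_iff {q : ℕ} (hq : q ≠ 0) :
    q ∣ Nat.card (CommGroup.torsion Fˣ) ↔ ∃ ζ : F, IsPrimitiveRoot ζ q := by
  have := finite_torsion_units F
  constructor
  · intro h
    obtain ⟨g, hg⟩ := IsCyclic.exists_generator (α := CommGroup.torsion Fˣ)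
    obtain ⟨k, hk⟩ := h
    rw [← orderOf_eq_card_of_forall_mem_zpowers hg] at hk
    have h1 : IsPrimitiveRoot (g ^ k) q :=
      (IsPrimitiveRoot.orderOf g).pow (orderOf_pos g) (hk.trans (mul_comm _ _))
    refine ⟨((g ^ k : CommGroup.torsion Fˣ) : Fˣ), ?_⟩
    exact IsPrimitiveRoot.coe_units_iff.mpr (IsPrimitiveRoot.coe_submonoidClass_iff.mpr h1)
  · rintro ⟨ζ, hζ⟩
    obtain ⟨u, rfl⟩ := hζ.isUnit hq
    have hu : IsPrimitiveRoot u q := IsPrimitiveRoot.coe_units_iff.mp hζ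
    have hut : u ∈ CommGroup.torsion Fˣ :=
      isOfFinOrder_iff_pow_eq_one.mpr ⟨q, Nat.pos_of_ne_zero hq, hu.pow_eq_one⟩
    rw [hu.eq_orderOf, ← Subgroup.orderOf_mk u hut]
    exact orderOf_dvd_natCard _

/-- If `q ^ 2 ∣ #μ_F`, then `F` contains the `q ^ 2`-th cyclotomic field, of degree
`q * (q - 1)` over `ℚ`. -/
theorem dvd_finrank_of_sq_dvd_card_torsion {q : ℕ} (hq : q.Prime)
    (h : q ^ 2 ∣ Nat.card (CommGroup.torsion Fˣ)) : q ∣ Module.finrank ℚ F := by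
  have hq2 : q ^ 2 ≠ 0 := pow_ne_zero _ hq.ne_zero
  obtain ⟨ζ, hζ⟩ := (dvd_card_torsion_iff F hq2).mp h
  have hdeg : (minpoly ℚ ζ).natDegree ∣ Module.finrank ℚ F :=
    minpoly.degree_dvd (Algebra.IsIntegral.isIntegral ζ)
  rw [← Polynomial.cyclotomic_eq_minpoly_rat hζ (Nat.pos_of_ne_zero hq2),
    Polynomial.natDegree_cyclotomic, Nat.totient_prime_pow hq two_pos] at hdeg
  exact (dvd_mul_of_dvd_left (by simp) _).trans hdeg

/-- Complex conjugation inverts roots of unity. -/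
theorem conj_torsion (c : F ≃ₐ[ℚ] F)
    (hc : ∃ φ : F →+* ℂ, ∀ x : F, φ (c x) = (starRingEnd ℂ) (φ x))
    (z : CommGroup.torsion Fˣ) : c ((z : Fˣ) : F) = (((z⁻¹ : CommGroup.torsion Fˣ) : Fˣ) : F) := by
  obtain ⟨φ, hφ⟩ := hc
  obtain ⟨n, hn, h⟩ := isOfFinOrder_iff_pow_eq_one.mp z.2
  apply φ.injective
  have h1 : ‖φ ((z : Fˣ) : F)‖ = 1 := by
    refine Complex.norm_eq_one_of_pow_eq_one (n := n) ?_ hn.ne'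
    rw [← map_pow, ← Units.val_pow_eq_pow_val, h, Units.val_one, map_one]
  rw [hφ, ← Complex.inv_eq_conj h1]
  simp

end NumberField

/-- (Proposition A of the paper.)  Let `F/ℚ` be a finite imaginary
abelian extension with Galois group `G`, `c ∈ G` complex conjugation, `S` a set of primes
not dividing `#G`, and `T⁻ = ℤ_(S)[G]/(1+c)`.  Let `U` be the set of primes `q ∈ S` such
that `F` contains a primitive `q`-th root of unity.  Then the group `T⁻ ⊗_{ℤ[G]} μ_F` is
cyclic of order `∏_{q∈U} q`, where `μ_F`, the group of roots of unity of `F` (the torsion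
subgroup of `Fˣ`), is regarded as a `ℤ[G]`-module via the Galois action — here realised
by an abstract `ℤ[G]`-module `M` together with a Galois-equivariant isomorphism `e`
onto `μ_F`. -/
theorem statement5 (F : Type) [Field F] [NumberField F] [IsGalois ℚ F]
    (hab : ∀ σ τ : F ≃ₐ[ℚ] F, σ * τ = τ * σ)
    (c : F ≃ₐ[ℚ] F)
    (hc : ∃ φ : F →+* ℂ, ∀ x : F, φ (c x) = (starRingEnd ℂ) (φ x))
    (himag : c ≠ 1)
    (S : Set ℕ) (hS : ∀ p ∈ S, p.Prime ∧ ¬ p ∣ Nat.card (F ≃ₐ[ℚ] F))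
    (M : Type) [AddCommGroup M] [Module (MonoidAlgebra ℤ (F ≃ₐ[ℚ] F)) M]
    (e : M ≃+ Additive (CommGroup.torsion Fˣ))
    (he : ∀ (g : F ≃ₐ[ℚ] F) (m : M),
      (((Additive.toMul (e (MonoidAlgebra.single g (1 : ℤ) • m)) :
          CommGroup.torsion Fˣ) : Fˣ) : F)
        = g ((((Additive.toMul (e m) : CommGroup.torsion Fˣ) : Fˣ) : F))) :
    letI : CommGroup (F ≃ₐ[ℚ] F) :=
      { (inferInstance : Group (F ≃ₐ[ℚ] F)) with mul_comm := hab }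
    ∃ Ufin : Finset ℕ,
      (∀ q : ℕ, q ∈ Ufin ↔ q ∈ S ∧ ∃ ζ : F, IsPrimitiveRoot ζ q) ∧
      IsAddCyclic (TensorProduct (MonoidAlgebra ℤ (F ≃ₐ[ℚ] F))
        (Tminus S (F ≃ₐ[ℚ] F) c) M) ∧
      Nat.card (TensorProduct (MonoidAlgebra ℤ (F ≃ₐ[ℚ] F))
        (Tminus S (F ≃ₐ[ℚ] F) c) M) = ∏ q ∈ Ufin, q := by
  letI : CommGroup (F ≃ₐ[ℚ] F) :=
    { (inferInstance : Group (F ≃ₐ[ℚ] F)) with mul_comm := hab }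
  have hfin := finite_torsion_units F
  have hcard : Nat.card M = Nat.card (CommGroup.torsion Fˣ) := Nat.card_congr e.toEquiv
  have hMfin : Finite M := Finite.of_equiv _ e.toEquiv.symm
  have hMcyc : IsAddCyclic M :=
    isAddCyclic_of_surjective e.symm.toAddMonoidHom e.symm.surjective
  have hcM : ∀ z : M, MonoidAlgebra.single c (1 : ℤ) • z = -z := by
    intro z
    apply e.injective
    apply Additive.toMul.injective
    apply Subtype.ext
    apply Units.ext
    rw [he c z, conj_torsion F c hc, map_neg]
    rfl
  have hsq : ∀ q ∈ S, ¬ q ^ 2 ∣ Nat.card M := by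
    intro q hq h
    refine (hS q hq).2 ?_
    rw [IsGalois.card_aut_eq_finrank]
    exact dvd_finrank_of_sq_dvd_card_torsion F (hS q hq).1 (hcard ▸ h)
  classical
  have hs : ∀ q, q ∈ (Nat.card M).primeFactors.filter (· ∈ S) ↔ q ∈ S ∧ q ∣ Nat.card M := by
    intro q
    rw [Finset.mem_filter, Nat.mem_primeFactors_of_ne_zero Nat.card_pos.ne']
    exact ⟨fun h => ⟨h.2, h.1.2⟩, fun h => ⟨⟨(hS q h.1).1, h.2⟩, h.1⟩⟩
  refine ⟨(Nat.card M).primeFactors.filter (· ∈ S), fun q => ?_, ?_⟩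
  · rw [hs, hcard]
    exact and_congr_right fun hq => dvd_card_torsion_iff F (hS q hq).1.ne_zero
  · exact Tminus_tensor_cyclic S (F ≃ₐ[ℚ] F) c (fun p hp => (hS p hp).1) M hcM hsq _ hs
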